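/- Let (G,c,o) be an infinite recurrent rooted network. Then the set of potentials on (G,c,o), viewed as a subset of ℝ^V with the product topology, is nonempty, compact, and convex. -/

import Mathlib

open scoped ENNReal
open Filter Topology Classical
noncomputable section

/-- A rooted network: a connected, locally finite simple graph with positive
symmetric edge conductances (extended by `0` to non-edges) and a root `o`. -/
structure RootedNetwork (V : Type*) where
  G : SimpleGraph V
  locallyFinite : ∀ x : V, (G.neighborSet x).Finite
  connected : G.Connected
  c : V → V → ℝ
  c_symm : ∀ x y, c x y = c y x
  c_pos : ∀ x y, G.Adj x y → 0 < c x y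
  c_eq_zero : ∀ x y, ¬ G.Adj x y → c x y = 0
  o : V

namespace RootedNetwork

variable {V : Type*}

/-- The vertex weight `c_x = Σ_{z ∼ x} c_{xz}`. -/
noncomputable def cv (N : RootedNetwork V) (x : V) : ℝ := ∑' y, N.c x y

/-- The transition probability `p(x,y) = c_{xy} / c_x` of the network random walk. -/
noncomputable def p (N : RootedNetwork V) (x y : V) : ℝ≥0∞ :=
  ENNReal.ofReal (N.c x y / N.cv x)

/-- The probability that the network random walk started at `x` begins with the
given finite sequence of steps. -/
noncomputable def pathProb (N : RootedNetwork V) : V → List V → ℝ≥0∞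
  | _, [] => 1
  | x, y :: l => N.p x y * pathProb N y l

/-- The probability, starting from `x`, that the walk ever visits `b`
(`P_x(τ_b < ∞)`), computed by decomposing over the finite path up to the first
visit of `b`. -/
noncomputable def hitProb (N : RootedNetwork V) (x b : V) : ℝ≥0∞ :=
  if x = b then 1
  else ∑' l : {l : List V // l.getLast? = some b ∧ b ∉ l.dropLast}, N.pathProb x l.1

/-- A rooted network is recurrent if the walk started from any vertex almost
surely visits the root `o`. -/
def Recurrent (N : RootedNetwork V) : Prop := ∀ x : V, N.hitProb x N.o = 1

/-- The Green kernel `G_o(x,y) = Σ_{n ≥ 0} P_x(X_n = y, τ_o > n)` of the walk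
killed at the root, computed as a sum over finite paths from `x` to `y`
avoiding `o` (the `n = 0` term is the first summand). -/
noncomputable def GreenKer (N : RootedNetwork V) (x y : V) : ℝ≥0∞ :=
  (if x = y ∧ x ≠ N.o then 1 else 0) +
    ∑' l : {l : List V // l.getLast? = some y ∧ N.o ∉ x :: l}, N.pathProb x l.1

/-- The Green density `g_o(x,y) = G_o(x,y) / c_y`. -/
noncomputable def greenDensity (N : RootedNetwork V) (x y : V) : ℝ≥0∞ :=
  N.GreenKer x y / ENNReal.ofReal (N.cv y)

/-- The network Laplacian `Δ f (v) = Σ_{x ∼ v} c_{vx} (f(x) - f(v))`. -/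
noncomputable def lap (N : RootedNetwork V) (f : V → ℝ) (v : V) : ℝ :=
  ∑' x, N.c v x * (f x - f v)

/-- A potential: a nonnegative function vanishing at `o`, with Laplacian `1`
at `o`, harmonic everywhere else. -/
def IsPotential (N : RootedNetwork V) (h : V → ℝ) : Prop :=
  (∀ v, 0 ≤ h v) ∧ h N.o = 0 ∧ N.lap h N.o = 1 ∧ ∀ v, v ≠ N.o → N.lap h v = 0

end RootedNetwork
namespace RootedNetwork

variable {V : Type*}

lemma lap_eq (N : RootedNetwork V) (f : V → ℝ) (v : V) :
    N.lap f v = ∑ x ∈ (N.locallyFinite v).toFinset, N.c v x * (f x - f v) := by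
  unfold lap
  apply tsum_eq_sum
  intro x hx
  have : ¬ N.G.Adj v x := by simpa using hx
  rw [N.c_eq_zero _ _ this, zero_mul]

lemma c_nonneg (N : RootedNetwork V) (x y : V) : 0 ≤ N.c x y := by
  by_cases h : N.G.Adj x y
  · exact (N.c_pos x y h).le
  · exact (N.c_eq_zero x y h).ge

lemma lap_add (N : RootedNetwork V) (f g : V → ℝ) (v : V) :
    N.lap (f + g) v = N.lap f v + N.lap g v := by
  simp only [lap_eq, ← Finset.sum_add_distrib]
  refine Finset.sum_congr rfl fun x _ => ?_
  simp only [Pi.add_apply]; ring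

lemma lap_smul (N : RootedNetwork V) (a : ℝ) (f : V → ℝ) (v : V) :
    N.lap (a • f) v = a * N.lap f v := by
  simp only [lap_eq, Finset.mul_sum]
  refine Finset.sum_congr rfl fun x _ => ?_
  simp only [Pi.smul_apply, smul_eq_mul]; ring

lemma lap_sub_const (N : RootedNetwork V) (f : V → ℝ) (a : ℝ) (v : V) :
    N.lap (fun x => f x - a) v = N.lap f v := by
  simp only [lap_eq]
  refine Finset.sum_congr rfl fun x _ => ?_
  ring

lemma lap_const_sub (N : RootedNetwork V) (f : V → ℝ) (a : ℝ) (v : V) :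
    N.lap (fun x => a - f x) v = - N.lap f v := by
  simp only [lap_eq, ← Finset.sum_neg_distrib]
  refine Finset.sum_congr rfl fun x _ => ?_
  ring

lemma continuous_lap (N : RootedNetwork V) (v : V) :
    Continuous (fun f : V → ℝ => N.lap f v) := by
  simp only [lap_eq]
  fun_prop

lemma adj_induction (N : RootedNetwork V) (P : V → Prop) (a : V) (ha : P a)
    (hs : ∀ x y, N.G.Adj x y → P x → P y) (b : V) : P b := by
  obtain ⟨w⟩ := N.connected.preconnected a b
  induction w with
  | nil => exact ha
  | cons h _ ih => exact ih (hs _ _ h ha)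

lemma max_principle [Infinite V] (N : RootedNetwork V) (B : Finset V) (f : V → ℝ)
    (hout : ∀ v, v ∉ B → f v ≤ 0) (hin : ∀ v ∈ B, 0 < f v → 0 ≤ N.lap f v) (x : V) :
    f x ≤ 0 := by
  by_contra! hx
  have hxB : x ∈ B := by
    by_contra h
    exact absurd (hout x h) (not_le.2 hx)
  obtain ⟨m, hm, hmax⟩ := B.exists_max_image f ⟨x, hxB⟩
  have hmpos : 0 < f m := hx.trans_le (hmax x hxB)
  have hglob : ∀ v, f v ≤ f m := fun v => by
    by_cases hv : v ∈ B
    · exact hmax v hv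
    · exact (hout v hv).trans hmpos.le
  have hall : ∀ v, f v = f m := by
    refine N.adj_induction (fun v => f v = f m) m rfl ?_
    intro u w huw hu
    have huB : u ∈ B := by
      by_contra h
      have := hout u h
      linarith
    have h0 := hin u huB (by linarith)
    rw [lap_eq] at h0
    have hle : ∀ y ∈ (N.locallyFinite u).toFinset, N.c u y * (f y - f u) ≤ 0 := fun y _ =>
      mul_nonpos_of_nonneg_of_nonpos (N.c_nonneg _ _) (by linarith [hglob y])
    have heq := le_antisymm (Finset.sum_nonpos hle) h0
    have := (Finset.sum_eq_zero_iff_of_nonpos hle).1 heq w (by simpa using huw)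
    rcases mul_eq_zero.1 this with h | h
    · exact absurd h (N.c_pos _ _ huw).ne'
    · linarith
  obtain ⟨z, hz⟩ := Infinite.exists_notMem_finset B
  have := hout z hz
  rw [hall z] at this
  linarith

lemma harnack (N : RootedNetwork V) (x : V) : ∃ M : ℝ, ∃ S : Finset V, ∀ h : V → ℝ,
    (∀ v, 0 ≤ h v) → h N.o = 0 → N.lap h N.o = 1 →
    (∀ v ∈ S, v ≠ N.o → N.lap h v = 0) → h x ≤ M := by
  refine N.adj_induction (fun x => ∃ M : ℝ, ∃ S : Finset V, ∀ h : V → ℝ,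
    (∀ v, 0 ≤ h v) → h N.o = 0 → N.lap h N.o = 1 →
    (∀ v ∈ S, v ≠ N.o → N.lap h v = 0) → h x ≤ M) N.o ⟨0, ∅, fun h _ h0 _ _ => h0.le⟩ ?_ x
  rintro u w huw ⟨M, S, hM⟩
  set F := (N.locallyFinite u).toFinset
  set C := ∑ y ∈ F, N.c u y
  have hC : 0 ≤ C := Finset.sum_nonneg fun y _ => N.c_nonneg u y
  refine ⟨(1 + C * M) / N.c u w, insert u S, fun h hn h0 h1 hS => ?_⟩
  have hu := hM h hn h0 h1 (fun v hv => hS v (Finset.mem_insert_of_mem hv))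
  have hl : N.lap h u ≤ 1 := by
    by_cases e : u = N.o
    · rw [e, h1]
    · rw [hS u (Finset.mem_insert_self _ _) e]; exact zero_le_one
  have hlap : N.lap h u = ∑ y ∈ F, N.c u y * h y - C * h u := by
    rw [lap_eq, Finset.sum_mul, ← Finset.sum_sub_distrib]
    exact Finset.sum_congr rfl fun y _ => by ring
  have hsing : N.c u w * h w ≤ ∑ y ∈ F, N.c u y * h y :=
    Finset.single_le_sum (f := fun y => N.c u y * h y)
      (fun y _ => mul_nonneg (N.c_nonneg _ _) (hn y)) (by simpa [F] using huw)
  rw [le_div_iff₀ (N.c_pos _ _ huw)]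
  have := mul_le_mul_of_nonneg_left hu hC
  linarith

/-- Extension by zero. -/
def ext0 (B : Finset V) : (B → ℝ) →ₗ[ℝ] (V → ℝ) where
  toFun f v := if h : v ∈ B then f ⟨v, h⟩ else 0
  map_add' f g := by ext v; by_cases h : v ∈ B <;> simp [h]
  map_smul' a f := by ext v; by_cases h : v ∈ B <;> simp [h]

/-- Dirichlet Laplacian. -/
def dirLap (N : RootedNetwork V) (B : Finset V) : (B → ℝ) →ₗ[ℝ] (B → ℝ) where
  toFun f v := N.lap (ext0 B f) v
  map_add' f g := by ext v; simp [lap_add]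
  map_smul' a f := by ext v; simp [lap_smul]

lemma exists_approx [Infinite V] (N : RootedNetwork V) (B : Finset V) (ho : N.o ∈ B) :
    ∃ h : V → ℝ, (∀ v, 0 ≤ h v) ∧ h N.o = 0 ∧ N.lap h N.o = 1 ∧
      ∀ v ∈ B, v ≠ N.o → N.lap h v = 0 := by
  have hext : ∀ (f : B → ℝ) v, v ∉ B → ext0 B f v = 0 := fun f v hv => by simp [ext0, hv]
  have key : ∀ f : B → ℝ, N.dirLap B f = 0 → ∀ v, ext0 B f v ≤ 0 := by
    intro f hf
    refine N.max_principle B _ (fun v hv => (hext f v hv).le) fun v hv _ => ?_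
    exact (congrFun hf ⟨v, hv⟩).ge
  have hinj : Function.Injective (N.dirLap B) := by
    rw [← LinearMap.ker_eq_bot, LinearMap.ker_eq_bot']
    intro f hf
    ext v
    have h1 := key f hf v
    have h2 := key (-f) (by rw [map_neg, hf, neg_zero]) v
    simp [ext0] at h1 h2
    exact le_antisymm h1 h2
  obtain ⟨g, hg⟩ := LinearMap.injective_iff_surjective.1 hinj
    (fun v => if (v : V) = N.o then -1 else 0)
  have hlap : ∀ v ∈ B, N.lap (ext0 B g) v = if v = N.o then -1 else 0 := fun v hv =>
    congrFun hg ⟨v, hv⟩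
  have hpos : 0 ≤ ext0 B g N.o := by
    have := N.max_principle B (fun x => 0 - ext0 B g x) (fun v hv => by simp [hext g v hv])
      (fun v hv _ => by
        rw [lap_const_sub, hlap v hv]; split_ifs <;> norm_num) N.o
    linarith
  have hle := N.max_principle B (fun x => ext0 B g x - ext0 B g N.o)
    (fun v hv => by simp only [hext g v hv]; linarith)
    (fun v hv hv0 => by
      have : v ≠ N.o := by
        rintro rfl
        simp at hv0
      rw [lap_sub_const, hlap v hv, if_neg this])
  refine ⟨fun x => ext0 B g N.o - ext0 B g x, fun v => by linarith [hle v], sub_self _, ?_, ?_⟩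
  · rw [lap_const_sub, hlap _ ho]; simp
  · intro v hv hvo
    rw [lap_const_sub, hlap _ hv]; simp [hvo]

lemma exists_potential [Infinite V] (N : RootedNetwork V) : ∃ h, N.IsPotential h := by
  have hex : ∀ B : Finset V, ∃ h : V → ℝ, (∀ v, 0 ≤ h v) ∧ h N.o = 0 ∧ N.lap h N.o = 1 ∧
      ∀ v ∈ B, v ≠ N.o → N.lap h v = 0 := fun B => by
    obtain ⟨h, a, b, c, d⟩ := N.exists_approx (insert N.o B) (Finset.mem_insert_self _ _)
    exact ⟨h, a, b, c, fun v hv => d v (Finset.mem_insert_of_mem hv)⟩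
  choose H hn h0 h1 hh using hex
  let U : Ultrafilter (Finset V) := Ultrafilter.of atTop
  have hU : (U : Filter (Finset V)) ≤ atTop := Ultrafilter.of_le _
  have hlim : ∀ x, ∃ a : ℝ, Tendsto (fun B => H B x) U (𝓝 a) := by
    intro x
    obtain ⟨M, S, hM⟩ := N.harnack x
    have hev : ∀ᶠ B in (U : Filter (Finset V)), H B x ∈ Set.Icc 0 M := by
      filter_upwards [hU (eventually_ge_atTop S)] with B hB
      exact ⟨hn B x, hM _ (hn B) (h0 B) (h1 B) fun v hv => hh B v (hB hv)⟩
    obtain ⟨a, _, ha⟩ := (isCompact_Icc (a := (0:ℝ)) (b := M)).ultrafilter_le_nhds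
      (U.map fun B => H B x) (le_principal_iff.2 hev)
    exact ⟨a, ha⟩
  choose h hlim using hlim
  have hT : Tendsto H U (𝓝 h) := tendsto_pi_nhds.2 hlim
  have hL : ∀ v, Tendsto (fun B => N.lap (H B) v) U (𝓝 (N.lap h v)) := fun v =>
    ((N.continuous_lap v).tendsto h).comp hT
  refine ⟨h, fun v => ge_of_tendsto' (hlim v) fun B => hn B v, ?_, ?_, fun v hv => ?_⟩
  · exact tendsto_nhds_unique (hlim _) (by simp [h0])
  · exact tendsto_nhds_unique (hL _) (by simp [h1])
  · refine tendsto_nhds_unique (hL v) (tendsto_const_nhds.congr' ?_)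
    filter_upwards [hU (eventually_ge_atTop {v})] with B hB
    exact (hh B v (hB (Finset.mem_singleton_self v)) hv).symm

lemma isClosed_potentials (N : RootedNetwork V) : IsClosed {h : V → ℝ | N.IsPotential h} := by
  simp only [IsPotential, Set.setOf_and, Set.setOf_forall]
  refine (isClosed_iInter fun v => isClosed_le continuous_const (continuous_apply v)).inter
    ((isClosed_eq (continuous_apply _) continuous_const).inter
    ((isClosed_eq (N.continuous_lap _) continuous_const).inter
    (isClosed_iInter fun v => isClosed_iInter fun _ =>
      isClosed_eq (N.continuous_lap _) continuous_const)))

end RootedNetwork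

/-- On an infinite recurrent rooted network, the set of potentials is a
nonempty, compact, convex subset of `ℝ^V` with the product topology. -/
theorem potentials_nonempty_compact_convex {V : Type*} [Infinite V]
    (N : RootedNetwork V) (hrec : N.Recurrent) :
    {h : V → ℝ | N.IsPotential h}.Nonempty ∧
    IsCompact {h : V → ℝ | N.IsPotential h} ∧
    Convex ℝ {h : V → ℝ | N.IsPotential h} := by
  refine ⟨N.exists_potential, ?_, ?_⟩
  · choose M S hM using N.harnack
    refine (isCompact_univ_pi fun x => isCompact_Icc (a := (0:ℝ)) (b := M x)).of_isClosed_subset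
      N.isClosed_potentials ?_
    rintro h ⟨a, b, c, d⟩ x -
    exact ⟨a x, hM x h a b c fun v _ => d v⟩
  · rintro f ⟨a, b, c, d⟩ g ⟨a', b', c', d'⟩ s t hs ht hst
    refine ⟨fun v => ?_, ?_, ?_, fun v hv => ?_⟩
    · exact add_nonneg (mul_nonneg hs (a v)) (mul_nonneg ht (a' v))
    · simp [b, b']
    · rw [RootedNetwork.lap_add, RootedNetwork.lap_smul, RootedNetwork.lap_smul, c, c']; linarith
    · rw [RootedNetwork.lap_add, RootedNetwork.lap_smul, RootedNetwork.lap_smul, d v hv, d' v hv]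
      simp
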